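/- arXiv:2010.08244 — 5 statements merged into one kernel-verified Lean document; each statement's English description precedes it below -/
import Mathlib

section
/- Under Assumption 1, suppose α*, α̂ ∈ A are such that α̂ minimizes f over A (i.e., f(α̂) ≤ f(α) for all α ∈ A), Assumption 2 holds at α*, namely f_u(α*) ≤ −log(C₄/γ₁), and γ₂ ≤ min(C₃/e, C₄/e). Then KL_{α̂} ≤ KL_{α*} + (2·γ₂²/C₅)·log(C₆/γ₂). -/
open MeasureTheory Real

/-!
Up to the factor `Z(S) + Z(Sᶜ)`, the objective is the sum of the exact contribution
`Z(S) · (KL + C₁)` of `S` and an integral over `Sᶜ`. The tangent line bound `log x ≤ x - 1`, taken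
at the point where it is an equality on average, places that integral between
`-Z(Sᶜ) · log (C₄ / Z(Sᶜ))` and `Z(Sᶜ) · log (C₃ / Z(Sᶜ))`. So `f` lies between two weighted means
with weights `Z(S)` and `Z(Sᶜ)`.

Let `M = f_u(α*)`. The lower mean at `α̂` is at most `f(α̂) ≤ f(α*) ≤ M`, and by Assumption 2
`M ≤ -log (C₄ / Z(Sᶜ; α̂))`, which is its second argument; hence its first argument `KL_α̂ + C₁` is
at most `M`. It remains to bound `M - (KL_α* + C₁)`, which is `Z(Sᶜ; α*) / Z(S; α*)` times the
distance from `M` to `log (C₃ / Z(Sᶜ; α*))`. If `M ≥ KL_α* + C₁`, then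
`KL_α* + C₁ ≤ -log (C₄ / γ₁)`, which says precisely that `Z(S; α*) ≥ C₅ / γ₁`; the rest is
monotonicity of `y ↦ y * log (C / y)` on `(0, C / e]` for `C = C₃ * exp (-C₁)`.
-/

lemma monotoneOn_mul_log_div {C : ℝ} (hC : 0 < C) :
    MonotoneOn (fun y => y * log (C / y)) (Set.Ioc 0 (C / exp 1)) := by
  intro x hx y hy hxy
  have exp_le_div {u : ℝ} (hu : u ∈ Set.Ioc 0 (C / exp 1)) : exp 1 ≤ C / u :=
    (le_div_comm₀ hu.1 (exp_pos 1)).1 hu.2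
  have mul_log_eq {u : ℝ} (hu : 0 < u) : u * log (C / u) = C * (log (C / u) / (C / u)) := by
    field_simp
  have hdiv : C / y ≤ C / x := div_le_div_of_nonneg_left hC.le hx.1 hxy
  simp only [mul_log_eq hx.1, mul_log_eq hy.1]
  exact mul_le_mul_of_nonneg_left
    (log_div_self_antitoneOn (exp_le_div hy) (exp_le_div hx) hdiv) hC.le

lemma log_div_le_two_mul_log_sqrt_mul_div {C D y : ℝ} (hC : 0 < C) (hy : 0 < y) (hyD : y ≤ D) :
    log (C / y) ≤ 2 * log (√(C * D) / y) := by
  have hD : 0 < D := hy.trans_le hyD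
  calc log (C / y) ≤ log (C / y) + log (D / y) :=
        le_add_of_nonneg_right (log_nonneg ((one_le_div hy).2 hyD))
    _ = 2 * log (√(C * D) / y) := by
        rw [log_div hC.ne' hy.ne', log_div hD.ne' hy.ne', log_div (by positivity) hy.ne',
          log_sqrt (by positivity), log_mul hC.ne' hD.ne']
        ring

lemma mul_div_mul_log_div_le {C D K x y : ℝ} (hy : 0 < y) (hxy : x ≤ y) (hyC : y ≤ C)
    (hyD : y ≤ D) (hK : 0 ≤ K) :
    x * y / K * log (C / y) ≤ 2 * y ^ 2 / K * log (√(C * D) / y) := by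
  have hlog : 0 ≤ log (C / y) := log_nonneg ((one_le_div hy).2 hyC)
  calc x * y / K * log (C / y) ≤ y * y / K * (2 * log (√(C * D) / y)) := by
        gcongr
        exact log_div_le_two_mul_log_sqrt_mul_div (hy.trans_le hyC) hy hyD
    _ = 2 * y ^ 2 / K * log (√(C * D) / y) := by ring

/-- The mean of `x` and `y` with weights `w` and `v`; it is the shape of the paper's bounds `f_u`
and `f_l` for the objective. Meaningful only for `w + v ≠ 0`. -/
noncomputable def weightedMean (w v x y : ℝ) : ℝ := (w * x + v * y) / (w + v)

lemma mul_weightedMean_sub {w v : ℝ} (hwv : w + v ≠ 0) (x y : ℝ) :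
    w * (weightedMean w v x y - x) = v * (y - weightedMean w v x y) := by
  rw [weightedMean]
  field_simp
  ring

lemma le_weightedMean_of_weightedMean_le {w v x y : ℝ} (hw : 0 < w) (hv : 0 ≤ v)
    (h : weightedMean w v x y ≤ y) : x ≤ weightedMean w v x y := by
  have hmul : 0 ≤ w * (weightedMean w v x y - x) := by
    rw [mul_weightedMean_sub (by positivity)]
    exact mul_nonneg hv (sub_nonneg.2 h)
  exact sub_nonneg.1 (nonneg_of_mul_nonneg_right hmul hw)

lemma mul_mul_exp_le_of_add_le_neg_log {k s c C γ : ℝ} (hc : 0 ≤ c) (hC : 0 < C) (hγ : 0 < γ)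
    (h : k + s ≤ -log (C / γ)) : C * c * exp s ≤ c * exp (-k) * γ := by
  have hexp : C / γ * exp s ≤ exp (-k) := by
    rw [← exp_log (div_pos hC hγ), ← exp_add]
    exact exp_le_exp.2 (by linarith)
  calc C * c * exp s = c * (C / γ * exp s) * γ := by field_simp
    _ ≤ c * exp (-k) * γ := by gcongr

lemma le_add_of_add_le_weightedMean {k l s c v C D γ₁ γ₂ : ℝ} (hk : 0 ≤ k) (hc : 0 < c)
    (hC : 0 < C) (hD : 0 < D) (hγ₁ : 0 < γ₁) (hv : 0 < v) (hvγ₂ : v ≤ γ₂)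
    (hγ₂ : γ₂ ≤ C * exp (-s) / exp 1)
    (hl : l + s ≤ weightedMean (c * exp (-k)) v (k + s) (log (C / v)))
    (hM : weightedMean (c * exp (-k)) v (k + s) (log (C / v)) ≤ -log (D / γ₁)) :
    l ≤ k + γ₁ * γ₂ / (D * c * exp s) * log (C * exp (-s) / γ₂) := by
  set w := c * exp (-k)
  set M := weightedMean w v (k + s) (log (C / v))
  have hw : 0 < w := by positivity
  have hγ₂_pos : 0 < γ₂ := hv.trans_le hvγ₂
  have hγ₂_le : γ₂ ≤ C * exp (-s) :=
    hγ₂.trans (div_le_self (by positivity) (one_le_exp zero_le_one))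
  have hlog : 0 ≤ log (C * exp (-s) / γ₂) := log_nonneg ((one_le_div hγ₂_pos).2 hγ₂_le)
  rcases le_or_gt l k with hlk | hkl
  · exact le_add_of_le_of_nonneg hlk (by positivity)
  have hkM : k + s ≤ M := by linarith
  have hDw : D * c * exp s ≤ w * γ₁ :=
    mul_mul_exp_le_of_add_le_neg_log hc.le hD hγ₁ (hkM.trans hM)
  have hgap : w * (M - (k + s)) ≤ γ₂ * log (C * exp (-s) / γ₂) :=
    calc w * (M - (k + s)) = v * (log (C / v) - M) := mul_weightedMean_sub (add_pos hw hv).ne' _ _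
      _ ≤ v * (log (C / v) - s) := by gcongr; linarith
      _ = v * log (C * exp (-s) / v) := by
          rw [mul_div_right_comm, log_mul (by positivity) (by positivity), log_exp, sub_eq_add_neg]
      _ ≤ γ₂ * log (C * exp (-s) / γ₂) :=
          monotoneOn_mul_log_div (by positivity) ⟨hv, hvγ₂.trans hγ₂⟩ ⟨hγ₂_pos, hγ₂⟩ hvγ₂
  rw [← sub_le_iff_le_add', div_mul_eq_mul_div, le_div_iff₀ (by positivity)]
  calc (l - k) * (D * c * exp s) ≤ (M - (k + s)) * (w * γ₁) :=
        mul_le_mul (by linarith) hDw (by positivity) (by linarith)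
    _ = γ₁ * (w * (M - (k + s))) := by ring
    _ ≤ γ₁ * (γ₂ * log (C * exp (-s) / γ₂)) := by gcongr
    _ = γ₁ * γ₂ * log (C * exp (-s) / γ₂) := by ring

-- For `b = 0` the left-hand side is `0`, the limit of `a * b * log (a / b)` as `b → 0`.
lemma mul_mul_log_div_le {a b c : ℝ} (ha : 0 ≤ a) (hb : 0 ≤ b) (hc : 0 < c) :
    a * b * log (a / b) ≤ a ^ 2 / c + a * b * (log c - 1) := by
  rcases ha.eq_or_lt with rfl | ha_pos
  · simp
  rcases hb.eq_or_lt with rfl | hb_pos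
  · simp only [mul_zero, zero_mul, add_zero]
    positivity
  have htangent : log (a / b) ≤ a / b / c + (log c - 1) := by
    have := log_le_sub_one_of_pos (show 0 < a / b / c by positivity)
    rw [log_div (by positivity) hc.ne'] at this
    linarith
  calc a * b * log (a / b) ≤ a * b * (a / b / c + (log c - 1)) := by gcongr
    _ = a ^ 2 / c + a * b * (log c - 1) := by field_simp

section

variable {Ω : Type*} [MeasurableSpace Ω]

lemma integral_mul_mul_log_div_le {ν : Measure Ω} {g h : Ω → ℝ} {C : ℝ} (hg : 0 ≤ᵐ[ν] g)
    (hh : 0 ≤ᵐ[ν] h) (hgh : 0 < ∫ x, g x * h x ∂ν) (hg_sq : Integrable (fun x => g x ^ 2) ν)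
    (hlog : Integrable (fun x => g x * h x * log (g x / h x)) ν) (hC : 0 < C)
    (hgC : ∫ x, g x ^ 2 ∂ν ≤ C) :
    ∫ x, g x * h x * log (g x / h x) ∂ν ≤
      (∫ x, g x * h x ∂ν) * log (C / ∫ x, g x * h x ∂ν) := by
  set Z := ∫ x, g x * h x ∂ν
  have hgh_int : Integrable (fun x => g x * h x) ν := .of_integral_ne_zero hgh.ne'
  have hsq_int := hg_sq.div_const (C / Z)
  have hmul_int := hgh_int.mul_const (log (C / Z) - 1)
  calc ∫ x, g x * h x * log (g x / h x) ∂ν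
      ≤ ∫ x, (g x ^ 2 / (C / Z) + g x * h x * (log (C / Z) - 1)) ∂ν := by
        refine integral_mono_ae hlog (hsq_int.add hmul_int) ?_
        filter_upwards [hg, hh] with x hgx hhx
        exact mul_mul_log_div_le hgx hhx (div_pos hC hgh)
    _ = (∫ x, g x ^ 2 ∂ν) / (C / Z) + Z * (log (C / Z) - 1) := by
        rw [integral_add hsq_int hmul_int, integral_div, integral_mul_const]
    _ ≤ C / (C / Z) + Z * (log (C / Z) - 1) := by gcongr
    _ = Z * log (C / Z) := by
        field_simp
        ring

lemma neg_mul_log_div_le_integral {ν : Measure Ω} {g h : Ω → ℝ} {C : ℝ} (hg : 0 ≤ᵐ[ν] g)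
    (hh : 0 ≤ᵐ[ν] h) (hgh : 0 < ∫ x, g x * h x ∂ν) (hh_sq : Integrable (fun x => h x ^ 2) ν)
    (hlog : Integrable (fun x => g x * h x * log (g x / h x)) ν) (hC : 0 < C)
    (hhC : ∫ x, h x ^ 2 ∂ν ≤ C) :
    -((∫ x, g x * h x ∂ν) * log (C / ∫ x, g x * h x ∂ν)) ≤
      ∫ x, g x * h x * log (g x / h x) ∂ν := by
  have hswap (x : Ω) : g x * h x * log (g x / h x) = -(h x * g x * log (h x / g x)) := by
    rw [← inv_div (h x), log_inv]
    ring
  have hlog_swap : Integrable (fun x => h x * g x * log (h x / g x)) ν := by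
    simpa only [hswap, neg_neg] using hlog.fun_neg
  simp only [hswap, integral_neg, neg_le_neg_iff]
  simp only [mul_comm (g _) (h _)] at hgh ⊢
  exact integral_mul_mul_log_div_le hh hg hgh hh_sq hlog_swap hC hhC

/-- The paper's `Z(T; α)`: the likelihood `m` integrated over `T` against the prior density `p`. -/
noncomputable def evidence (μ : Measure Ω) (T : Set Ω) (m p : Ω → ℝ) : ℝ :=
  ∫ θ in T, m θ * p θ ∂μ

/-- The paper's objective `f(α)`. The paper writes its normalising constant as the
sum of the evidences on `S` and `Sᶜ`, which is kept here. -/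
noncomputable def surrogateObjective (μ : Measure Ω) (S : Set Ω) (m p : Ω → ℝ) : ℝ :=
  (evidence μ S m p + evidence μ Sᶜ m p)⁻¹ * ∫ θ, m θ * p θ * log (m θ / p θ) ∂μ

/-- The paper's `KL_α`: the Kullback–Leibler divergence from the uniform density on `S` to a density
with the constant value `a` on `S`. The log-ratio is constant on `S`, so no integral is needed. -/
noncomputable def uniformKL (μ : Measure Ω) (S : Set Ω) (a : ℝ) : ℝ :=
  log ((μ.real S)⁻¹ / a)

variable {μ : Measure Ω} {S : Set Ω} {m p : Ω → ℝ} {a c : ℝ}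

lemma uniformKL_nonneg (hS : MeasurableSet S) (hμS : 0 < μ.real S) (ha : 0 < a)
    (hp_nonneg : 0 ≤ᵐ[μ] p) (hpS : ∀ θ ∈ S, p θ = a) (hp : ∫ θ, p θ ∂μ = 1) :
    0 ≤ uniformKL μ S a := by
  have hp_int : Integrable p μ := .of_integral_ne_zero (by simp [hp])
  have hmass : μ.real S * a ≤ 1 :=
    calc μ.real S * a = ∫ θ in S, p θ ∂μ := by
          rw [setIntegral_congr_fun hS hpS, setIntegral_const, smul_eq_mul]
      _ ≤ ∫ θ, p θ ∂μ := setIntegral_le_integral hp_int hp_nonneg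
      _ = 1 := hp
  refine log_nonneg ?_
  rwa [one_le_div ha, ← one_div, le_div_iff₀' hμS]

lemma uniformKL_add_log (hμS : μ.real S ≠ 0) (ha : a ≠ 0) (hc : c ≠ 0) :
    uniformKL μ S a + log (c / (μ.real S)⁻¹) = log (c / a) := by
  have hinv := inv_ne_zero hμS
  rw [uniformKL, log_div hinv ha, log_div hc hinv, log_div hc ha]
  ring

lemma evidence_eq_mul_exp_neg_uniformKL (hS : MeasurableSet S) (hμS : 0 < μ.real S) (ha : 0 < a)
    (hmS : ∀ θ ∈ S, m θ = c) (hpS : ∀ θ ∈ S, p θ = a) :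
    evidence μ S m p = c * exp (-uniformKL μ S a) := by
  have hconst : Set.EqOn (fun θ => m θ * p θ) (fun _ => c * a) S :=
    fun θ hθ => by simp only [hmS θ hθ, hpS θ hθ]
  rw [evidence, setIntegral_congr_fun hS hconst, setIntegral_const, uniformKL, ← log_inv,
    exp_log (by positivity), smul_eq_mul]
  field_simp

lemma evidence_pos (hS : MeasurableSet S) (hμS : 0 < μ.real S) (ha : 0 < a) (hc : 0 < c)
    (hmS : ∀ θ ∈ S, m θ = c) (hpS : ∀ θ ∈ S, p θ = a) : 0 < evidence μ S m p := by
  rw [evidence_eq_mul_exp_neg_uniformKL hS hμS ha hmS hpS]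
  positivity

lemma surrogateObjective_eq_div (hS : MeasurableSet S) (hμS : μ.real S ≠ 0) (ha : a ≠ 0)
    (hc : c ≠ 0) (hmS : ∀ θ ∈ S, m θ = c) (hpS : ∀ θ ∈ S, p θ = a)
    (hlog : Integrable (fun θ => m θ * p θ * log (m θ / p θ)) μ) :
    surrogateObjective μ S m p =
      (evidence μ S m p * (uniformKL μ S a + log (c / (μ.real S)⁻¹)) +
        ∫ θ in Sᶜ, m θ * p θ * log (m θ / p θ) ∂μ) / (evidence μ S m p + evidence μ Sᶜ m p) := by
  have hconst : Set.EqOn (fun θ => m θ * p θ * log (m θ / p θ))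
      (fun θ => m θ * p θ * log (c / a)) S :=
    fun θ hθ => by simp only [hmS θ hθ, hpS θ hθ]
  have hon : ∫ θ in S, m θ * p θ * log (m θ / p θ) ∂μ = evidence μ S m p * log (c / a) := by
    rw [setIntegral_congr_fun hS hconst, integral_mul_const, evidence]
  rw [surrogateObjective, ← integral_add_compl hS hlog, hon, uniformKL_add_log hμS ha hc,
    inv_mul_eq_div]

lemma surrogateObjective_le_weightedMean {C : ℝ} (hS : MeasurableSet S) (hμS : 0 < μ.real S)
    (ha : 0 < a) (hc : 0 < c) (hm_nonneg : 0 ≤ᵐ[μ] m) (hp_nonneg : 0 ≤ᵐ[μ] p)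
    (hmS : ∀ θ ∈ S, m θ = c) (hpS : ∀ θ ∈ S, p θ = a) (hZ : 0 < evidence μ Sᶜ m p)
    (hlog : Integrable (fun θ => m θ * p θ * log (m θ / p θ)) μ)
    (hm_sq : IntegrableOn (fun θ => m θ ^ 2) Sᶜ μ) (hC : 0 < C)
    (hmC : ∫ θ in Sᶜ, m θ ^ 2 ∂μ ≤ C) :
    surrogateObjective μ S m p ≤ weightedMean (evidence μ S m p) (evidence μ Sᶜ m p)
      (uniformKL μ S a + log (c / (μ.real S)⁻¹)) (log (C / evidence μ Sᶜ m p)) := by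
  have hZS : 0 < evidence μ S m p := evidence_pos hS hμS ha hc hmS hpS
  rw [surrogateObjective_eq_div hS hμS.ne' ha.ne' hc.ne' hmS hpS hlog, weightedMean]
  gcongr
  exact integral_mul_mul_log_div_le (ae_restrict_of_ae hm_nonneg) (ae_restrict_of_ae hp_nonneg)
    hZ hm_sq hlog.integrableOn hC hmC

lemma weightedMean_le_surrogateObjective {C : ℝ} (hS : MeasurableSet S) (hμS : 0 < μ.real S)
    (ha : 0 < a) (hc : 0 < c) (hm_nonneg : 0 ≤ᵐ[μ] m) (hp_nonneg : 0 ≤ᵐ[μ] p)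
    (hmS : ∀ θ ∈ S, m θ = c) (hpS : ∀ θ ∈ S, p θ = a) (hZ : 0 < evidence μ Sᶜ m p)
    (hlog : Integrable (fun θ => m θ * p θ * log (m θ / p θ)) μ)
    (hp_sq : IntegrableOn (fun θ => p θ ^ 2) Sᶜ μ) (hC : 0 < C)
    (hpC : ∫ θ in Sᶜ, p θ ^ 2 ∂μ ≤ C) :
    weightedMean (evidence μ S m p) (evidence μ Sᶜ m p)
      (uniformKL μ S a + log (c / (μ.real S)⁻¹)) (-log (C / evidence μ Sᶜ m p)) ≤
      surrogateObjective μ S m p := by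
  have hZS : 0 < evidence μ S m p := evidence_pos hS hμS ha hc hmS hpS
  rw [surrogateObjective_eq_div hS hμS.ne' ha.ne' hc.ne' hmS hpS hlog, weightedMean, mul_neg]
  gcongr
  exact neg_mul_log_div_le_integral (ae_restrict_of_ae hm_nonneg) (ae_restrict_of_ae hp_nonneg)
    hZ hp_sq hlog.integrableOn hC hpC

lemma uniformKL_add_le_of_surrogateObjective_le {C M γ : ℝ} (hS : MeasurableSet S)
    (hμS : 0 < μ.real S) (ha : 0 < a) (hc : 0 < c) (hm_nonneg : 0 ≤ᵐ[μ] m)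
    (hp_nonneg : 0 ≤ᵐ[μ] p) (hmS : ∀ θ ∈ S, m θ = c) (hpS : ∀ θ ∈ S, p θ = a)
    (hlog : Integrable (fun θ => m θ * p θ * log (m θ / p θ)) μ)
    (hp_sq : IntegrableOn (fun θ => p θ ^ 2) Sᶜ μ) (hC : 0 < C)
    (hpC : ∫ θ in Sᶜ, p θ ^ 2 ∂μ ≤ C) (hγ : 0 < γ) (hγZ : γ ≤ evidence μ Sᶜ m p)
    (hM : surrogateObjective μ S m p ≤ M) (hMγ : M ≤ -log (C / γ)) :
    uniformKL μ S a + log (c / (μ.real S)⁻¹) ≤ M := by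
  have hZ : 0 < evidence μ Sᶜ m p := hγ.trans_le hγZ
  have hZS : 0 < evidence μ S m p := evidence_pos hS hμS ha hc hmS hpS
  have hmean := (weightedMean_le_surrogateObjective hS hμS ha hc hm_nonneg hp_nonneg hmS hpS hZ
    hlog hp_sq hC hpC).trans hM
  have hlogγ : log (C / evidence μ Sᶜ m p) ≤ log (C / γ) := by gcongr
  exact (le_weightedMean_of_weightedMean_le hZS hZ.le
    (hmean.trans (hMγ.trans (neg_le_neg hlogγ)))).trans hmean

theorem arml_theorem_full_version_general {q : Ω → ℝ} {b C₁ C₃ C₄ γ₁ γ₂ : ℝ}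
    (hS : MeasurableSet S) (hμS : 0 < μ.real S) (ha : 0 < a) (hb : 0 < b) (hc : 0 < c)
    (hm_nonneg : 0 ≤ᵐ[μ] m) (hp_nonneg : 0 ≤ᵐ[μ] p) (hq_nonneg : 0 ≤ᵐ[μ] q)
    (hmS : ∀ θ ∈ S, m θ = c) (hpS : ∀ θ ∈ S, p θ = a) (hqS : ∀ θ ∈ S, q θ = b)
    (hp : ∫ θ, p θ ∂μ = 1)
    (hp_log : Integrable (fun θ => m θ * p θ * log (m θ / p θ)) μ)
    (hq_log : Integrable (fun θ => m θ * q θ * log (m θ / q θ)) μ)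
    (hm_sq : IntegrableOn (fun θ => m θ ^ 2) Sᶜ μ) (hq_sq : IntegrableOn (fun θ => q θ ^ 2) Sᶜ μ)
    (hC₁ : C₁ = log (c / (μ.real S)⁻¹))
    (hmC₃ : ∫ θ in Sᶜ, m θ ^ 2 ∂μ ≤ C₃) (hqC₄ : ∫ θ in Sᶜ, q θ ^ 2 ∂μ ≤ C₄)
    (hγ₁ : 0 < γ₁) (hγ₁p : γ₁ ≤ evidence μ Sᶜ m p) (hγ₁q : γ₁ ≤ evidence μ Sᶜ m q)
    (hpγ₂ : evidence μ Sᶜ m p ≤ γ₂)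
    (hγ₂C₃ : γ₂ ≤ C₃ * exp (-C₁) / exp 1) (hγ₂C₄ : γ₂ ≤ C₄)
    (hqp : surrogateObjective μ S m q ≤ surrogateObjective μ S m p)
    (hA2 : weightedMean (evidence μ S m p) (evidence μ Sᶜ m p) (uniformKL μ S a + C₁)
      (log (C₃ / evidence μ Sᶜ m p)) ≤ -log (C₄ / γ₁)) :
    uniformKL μ S b ≤ uniformKL μ S a +
      2 * γ₂ ^ 2 / (C₄ * c * exp C₁) * log (√(C₃ * C₄ * exp (-C₁)) / γ₂) := by
  subst hC₁
  have hZp : 0 < evidence μ Sᶜ m p := hγ₁.trans_le hγ₁p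
  have hγ₂ : 0 < γ₂ := hZp.trans_le hpγ₂
  have hC₄ : 0 < C₄ := hγ₂.trans_le hγ₂C₄
  have hC₃_exp : 0 < C₃ * exp (-log (c / (μ.real S)⁻¹)) :=
    (div_pos_iff_of_pos_right (exp_pos 1)).1 (hγ₂.trans_le hγ₂C₃)
  have hC₃ : 0 < C₃ := pos_of_mul_pos_left hC₃_exp (exp_pos _).le
  have hupper := hqp.trans (surrogateObjective_le_weightedMean hS hμS ha hc hm_nonneg hp_nonneg
    hmS hpS hZp hp_log hm_sq hC₃ hmC₃)
  have hKLq := uniformKL_add_le_of_surrogateObjective_le hS hμS hb hc hm_nonneg hq_nonneg hmS hqS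
    hq_log hq_sq hC₄ hqC₄ hγ₁ hγ₁q hupper hA2
  rw [evidence_eq_mul_exp_neg_uniformKL hS hμS ha hmS hpS] at hKLq hA2
  have hbound := le_add_of_add_le_weightedMean (uniformKL_nonneg hS hμS ha hp_nonneg hpS hp) hc
    hC₃ hC₄ hγ₁ hZp hpγ₂ hγ₂C₃ hKLq hA2
  rw [mul_right_comm C₃]
  exact hbound.trans (add_le_add_right (mul_div_mul_log_div_le hγ₂ (hγ₁p.trans hpγ₂)
    (hγ₂C₃.trans (div_le_self hC₃_exp.le (one_le_exp zero_le_one))) hγ₂C₄ (by positivity)) _)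

end

/-- **Theorem 1 (full version).** Under Assumption 1 (the main-task likelihood `pm` and every
surrogate prior `p α` are constant on the small support set `S` of the uniform true prior
`pstar`), if `α̂` minimizes the surrogate objective `f` over `A`, Assumption 2 holds at `α*`
(`f_u(α*) ≤ −log(C₄/γ₁)`), and `γ₂ ≤ min(C₃/e, C₄/e)`, then
`KL_{α̂} ≤ KL_{α*} + (2γ₂²/C₅)·log(C₆/γ₂)`. -/
theorem arml_theorem_full_version
    {Ω : Type*} [MeasurableSpace Ω] (μ : Measure Ω)
    (S : Set Ω) (hSmeas : MeasurableSet S) (hS0 : 0 < μ S) (hSfin : μ S < ⊤)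
    (pstar : Ω → ℝ)
    (hpstar_in : ∀ θ ∈ S, pstar θ = ((μ S).toReal)⁻¹)
    (hpstar_out : ∀ θ ∉ S, pstar θ = 0)
    (pm : Ω → ℝ) (hpm_meas : Measurable pm) (hpm_nonneg : ∀ θ, 0 ≤ pm θ)
    {A : Type*} [Nonempty A]
    (p : A → Ω → ℝ) (hp_meas : ∀ a, Measurable (p a))
    (hp_pos : ∀ a θ, 0 < p a θ)
    (hp_dens : ∀ a, ∫ θ, p a θ ∂μ = 1)
    -- Assumption 1: `pm` and every `p α` are constant on `S`
    (hpm_constS : ∀ θ ∈ S, ∀ θ' ∈ S, pm θ = pm θ')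
    (hp_constS : ∀ a, ∀ θ ∈ S, ∀ θ' ∈ S, p a θ = p a θ')
    (θs : Ω) (hθsS : θs ∈ S) (hθs_pos : 0 < pm θs)
    (C₁ C₂ : ℝ) (hC₂ : C₂ = pm θs) (hC₁ : C₁ = Real.log (pm θs / pstar θs))
    (hC₁_nonpos : C₁ ≤ 0)
    (KL : A → ℝ) (hKL : ∀ a, KL a = Real.log (pstar θs / p a θs))
    (ZS ZSb : A → ℝ)
    (hZS : ∀ a, ZS a = ∫ θ in S, pm θ * p a θ ∂μ)
    (hZSb : ∀ a, ZSb a = ∫ θ in Sᶜ, pm θ * p a θ ∂μ)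
    (hZSb_int : ∀ a, IntegrableOn (fun θ => pm θ * p a θ) Sᶜ μ)
    (hZSb_pos : ∀ a, 0 < ZSb a)
    (γ₁ γ₂ : ℝ) (hγ₁ : IsGLB (Set.range ZSb) γ₁) (hγ₁_pos : 0 < γ₁)
    (hγ₂ : IsLUB (Set.range ZSb) γ₂)
    (C₃ : ℝ) (hC₃ : C₃ = ∫ θ in Sᶜ, (pm θ) ^ 2 ∂μ)
    (hC₃_int : IntegrableOn (fun θ => (pm θ) ^ 2) Sᶜ μ)
    (hC₃_pos : 0 < C₃)
    (C₄ : ℝ)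
    (hC₄_int : ∀ a, IntegrableOn (fun θ => (p a θ) ^ 2) Sᶜ μ)
    (hC₄ : IsLUB (Set.range fun a => ∫ θ in Sᶜ, (p a θ) ^ 2 ∂μ) C₄)
    (hC₄_pos : 0 < C₄)
    (C₅ C₆ : ℝ) (hC₅ : C₅ = C₄ * C₂ * Real.exp C₁)
    (hC₆ : C₆ = Real.sqrt (C₃ * C₄ * Real.exp (-C₁)))
    (f fu fl : A → ℝ)
    (hf_int : ∀ a,
      Integrable (fun θ => pm θ * p a θ * Real.log (pm θ / p a θ)) μ)
    (hf : ∀ a, f a = (ZS a + ZSb a)⁻¹ *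
      ∫ θ, pm θ * p a θ * Real.log (pm θ / p a θ) ∂μ)
    (hfu : ∀ a, fu a = (ZS a * (KL a + C₁) + ZSb a * Real.log (C₃ / ZSb a)) /
      (ZS a + ZSb a))
    (hfl : ∀ a, fl a = (ZS a * (KL a + C₁) - ZSb a * Real.log (C₄ / ZSb a)) /
      (ZS a + ZSb a))
    (αs αh : A)
    (hαh_min : ∀ a, f αh ≤ f a)
    -- Assumption 2 at α*
    (hA2 : fu αs ≤ - Real.log (C₄ / γ₁))
    (hγ₂C₃ : γ₂ ≤ C₃ / Real.exp 1) (hγ₂C₄ : γ₂ ≤ C₄ / Real.exp 1) :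
    KL αh ≤ KL αs + 2 * γ₂ ^ 2 / C₅ * Real.log (C₆ / γ₂) := by
  obtain rfl := funext hKL
  obtain rfl := funext hZS
  obtain rfl := funext hZSb
  obtain rfl := funext hf
  obtain rfl := funext hfu
  subst hC₂ hC₅ hC₆
  have hp_nonneg (a : A) : 0 ≤ᵐ[μ] p a := .of_forall fun θ => (hp_pos a θ).le
  have hC₃_le : C₃ ≤ C₃ * exp (-C₁) :=
    le_mul_of_one_le_right hC₃_pos.le (one_le_exp (neg_nonneg.2 hC₁_nonpos))
  simp only [hpstar_in θs hθsS] at hC₁ hA2 ⊢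
  exact arml_theorem_full_version_general hSmeas (ENNReal.toReal_pos hS0.ne' hSfin.ne)
    (hp_pos αs θs) (hp_pos αh θs) hθs_pos (.of_forall hpm_nonneg) (hp_nonneg αs) (hp_nonneg αh)
    (fun θ hθ => hpm_constS θ hθ θs hθsS) (fun θ hθ => hp_constS αs θ hθ θs hθsS)
    (fun θ hθ => hp_constS αh θ hθ θs hθsS) (hp_dens αs) (hf_int αs) (hf_int αh) hC₃_int
    (hC₄_int αh) hC₁ hC₃.ge (hC₄.1 ⟨αh, rfl⟩) hγ₁_pos (hγ₁.1 ⟨αs, rfl⟩) (hγ₁.1 ⟨αh, rfl⟩)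
    (hγ₂.1 ⟨αs, rfl⟩) (hγ₂C₃.trans (by gcongr))
    (hγ₂C₄.trans (div_le_self hC₄_pos.le (one_le_exp zero_le_one))) (hαh_min αs) hA2
end

section
/- Let (Ω, F, μ) be a measure space, A ∈ F, and let p, q : Ω → ℝ be measurable functions with p ≥ 0 on A and q > 0 on A. Suppose Z = ∫_A p·q dμ satisfies 0 < Z < ∞, that ∫_A q² dμ < ∞, and that the function p·q·log(p/q) (with the convention 0·log(0/q) = 0) is μ-integrable on A. Then ∫_A (p·q/Z)·log(p/q) dμ ≥ −log((∫_A q² dμ)/Z). -/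
open MeasureTheory Real

/-! Put the finite measure with density `q ^ 2` on `A`. The integral of `p / q` against it is `Z`,
and that of `(p / q) * log (p / q)` is `∫_A p q log (p / q)`, so Jensen's inequality for the convex
function `x ↦ x * log x` gives `Z * log (Z / ∫_A q ^ 2) ≤ ∫_A p q log (p / q)`. This is the log-sum
inequality for `p q` and `q ^ 2`. -/

section WeightedJensen

variable {Ω E : Type*} [MeasurableSpace Ω] {μ : Measure Ω}
  [NormedAddCommGroup E] [NormedSpace ℝ E] {w : Ω → ℝ}

theorem integral_withDensity_ofReal (hw : 0 ≤ᵐ[μ] w) (hw_meas : AEMeasurable w μ) (f : Ω → E) :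
    ∫ x, f x ∂μ.withDensity (fun x => ENNReal.ofReal (w x)) = ∫ x, w x • f x ∂μ := by
  rw [integral_withDensity_eq_integral_toReal_smul₀ hw_meas.ennreal_ofReal (by simp)]
  refine integral_congr_ae ?_
  filter_upwards [hw] with x hx
  rw [ENNReal.toReal_ofReal hx]

theorem integrable_withDensity_ofReal_iff (hw : 0 ≤ᵐ[μ] w) (hw_meas : AEMeasurable w μ)
    {f : Ω → E} :
    Integrable f (μ.withDensity fun x => ENNReal.ofReal (w x)) ↔
      Integrable (fun x => w x • f x) μ := by
  rw [integrable_withDensity_iff_integrable_smul₀' hw_meas.ennreal_ofReal (by simp)]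
  refine integrable_congr ?_
  filter_upwards [hw] with x hx
  rw [ENNReal.toReal_ofReal hx]

theorem map_weighted_average_le_of_convexOn [CompleteSpace E] {s : Set E} {φ : E → ℝ} {f : Ω → E}
    (hφ : ConvexOn ℝ s φ) (hφ_cont : ContinuousOn φ s) (hs : IsClosed s)
    (hw : 0 ≤ᵐ[μ] w) (hw_int : Integrable w μ) (hw_pos : 0 < ∫ x, w x ∂μ)
    (hf_mem : ∀ᵐ x ∂μ, f x ∈ s) (hf_int : Integrable (fun x => w x • f x) μ)
    (hφf_int : Integrable (fun x => w x * φ (f x)) μ) :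
    φ ((∫ x, w x ∂μ)⁻¹ • ∫ x, w x • f x ∂μ) ≤
      (∫ x, w x ∂μ)⁻¹ * ∫ x, w x * φ (f x) ∂μ := by
  have hw_meas := hw_int.aemeasurable
  set ν := μ.withDensity fun x => ENNReal.ofReal (w x)
  have hν_mass : ν.real Set.univ = ∫ x, w x ∂μ := by
    simpa using integral_withDensity_ofReal hw hw_meas (fun _ => (1 : ℝ))
  have : IsFiniteMeasure ν := isFiniteMeasure_withDensity_ofReal hw_int.2
  have : NeZero ν := ⟨fun hν => hw_pos.ne' (by simp [← hν_mass, hν])⟩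
  have jensen : φ (⨍ x, f x ∂ν) ≤ ⨍ x, φ (f x) ∂ν :=
    hφ.map_average_le hφ_cont hs (withDensity_absolutelyContinuous μ _ hf_mem)
      ((integrable_withDensity_ofReal_iff hw hw_meas).2 hf_int)
      ((integrable_withDensity_ofReal_iff hw hw_meas).2 hφf_int)
  simpa only [average_eq, hν_mass, ν, integral_withDensity_ofReal hw hw_meas, smul_eq_mul]
    using jensen

end WeightedJensen

theorem integral_mul_log_div_integral_le {Ω : Type*} [MeasurableSpace Ω] {μ : Measure Ω}
    {f g : Ω → ℝ} (hf : 0 ≤ᵐ[μ] f) (hg : 0 ≤ᵐ[μ] g) (hfg : ∀ᵐ x ∂μ, g x = 0 → f x = 0)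
    (hf_int : Integrable f μ) (hg_int : Integrable g μ)
    (hlog_int : Integrable (fun x => f x * log (f x / g x)) μ) :
    (∫ x, f x ∂μ) * log ((∫ x, f x ∂μ) / ∫ x, g x ∂μ) ≤ ∫ x, f x * log (f x / g x) ∂μ := by
  have hf_eq : (fun x => g x • (f x / g x)) =ᵐ[μ] f := by
    filter_upwards [hfg] with x hx
    exact mul_div_cancel_of_imp' hx
  have hlog_eq : (fun x => g x * (f x / g x * log (f x / g x))) =ᵐ[μ]
      fun x => f x * log (f x / g x) := by
    filter_upwards [hf_eq] with x hx
    rw [← mul_assoc, ← smul_eq_mul (g x), hx]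
  obtain hG | hG := (integral_nonneg_of_ae hg).eq_or_lt
  · have hg_zero : g =ᵐ[μ] 0 := (integral_eq_zero_iff_of_nonneg_ae hg hg_int).1 hG.symm
    have hlog_zero : (fun x => f x * log (f x / g x)) =ᵐ[μ] 0 := by
      filter_upwards [hg_zero] with x hx
      simp [hx]
    simp [← hG, integral_congr_ae hlog_zero]
  · have jensen := map_weighted_average_le_of_convexOn (f := fun x => f x / g x)
      convexOn_mul_log continuous_mul_log.continuousOn isClosed_Ici hg hg_int hG
      (by filter_upwards [hf, hg] with x hfx hgx using div_nonneg hfx hgx)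
      (hf_int.congr hf_eq.symm) (hlog_int.congr hlog_eq.symm)
    rw [integral_congr_ae hf_eq, integral_congr_ae hlog_eq, smul_eq_mul, mul_assoc,
      inv_mul_eq_div _ (∫ x, f x ∂μ)] at jensen
    exact le_of_mul_le_mul_left jensen (inv_pos.2 hG)

/-- **Jensen lower bound.** Writing `∫_A (p·q/Z)·log(p/q) dμ = −∫_A (p·q/Z)·log(q/p) dμ`, the
expectation of `log(q/p)` under the probability measure with density `p·q/Z` on `A` is at most
`log((∫_A q² dμ)/Z)`, giving the stated lower bound. (The convention `0·log(0/q) = 0` holds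
automatically since `Real.log 0 = 0`.) -/
theorem jensen_lower_bound
    {Ω : Type*} [MeasurableSpace Ω] (μ : Measure Ω)
    (A : Set Ω) (hA : MeasurableSet A)
    (p q : Ω → ℝ) (hp_meas : Measurable p) (hq_meas : Measurable q)
    (hp_nonneg : ∀ θ ∈ A, 0 ≤ p θ) (hq_pos : ∀ θ ∈ A, 0 < q θ)
    (Z : ℝ) (hZ : Z = ∫ θ in A, p θ * q θ ∂μ) (hZ_pos : 0 < Z)
    (hZ_int : IntegrableOn (fun θ => p θ * q θ) A μ)
    (hq2_int : IntegrableOn (fun θ => (q θ) ^ 2) A μ)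
    (hlog_int : IntegrableOn (fun θ => p θ * q θ * Real.log (p θ / q θ)) A μ) :
    - Real.log ((∫ θ in A, (q θ) ^ 2 ∂μ) / Z) ≤
      ∫ θ in A, p θ * q θ / Z * Real.log (p θ / q θ) ∂μ := by
  have hpq_nonneg : 0 ≤ᵐ[μ.restrict A] fun θ => p θ * q θ :=
    ae_restrict_of_forall_mem hA fun θ hθ => mul_nonneg (hp_nonneg θ hθ) (hq_pos θ hθ).le
  have hratio : ∀ θ, p θ * q θ / q θ ^ 2 = p θ / q θ := fun θ => by field_simp
  have log_sum : Z * log (Z / ∫ θ in A, q θ ^ 2 ∂μ) ≤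
      ∫ θ in A, p θ * q θ * log (p θ / q θ) ∂μ := by
    simpa only [hratio, ← hZ] using integral_mul_log_div_integral_le hpq_nonneg
      (ae_of_all _ fun θ => sq_nonneg (q θ)) (ae_of_all _ fun θ hθ => by simp [sq_eq_zero_iff.1 hθ])
      hZ_int hq2_int (by simpa only [hratio, IntegrableOn] using hlog_int)
  calc - log ((∫ θ in A, q θ ^ 2 ∂μ) / Z)
      = log (Z / ∫ θ in A, q θ ^ 2 ∂μ) := by rw [← log_inv, inv_div]
    _ ≤ (∫ θ in A, p θ * q θ * log (p θ / q θ) ∂μ) / Z := (le_div_iff₀' hZ_pos).2 log_sum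
    _ = ∫ θ in A, p θ * q θ / Z * log (p θ / q θ) ∂μ := by
      simp only [← integral_div, div_mul_eq_mul_div]
end

section
/- Under Assumption 1, suppose moreover that for every α ∈ A the function p^m·p_α·log(p^m/p_α) is μ-integrable on Ω∖S. Then for every α ∈ A one has the sandwich bounds f_l(α) ≤ f(α) ≤ f_u(α). -/
open MeasureTheory Real

/-!
With respect to the weight `w = p^m·p_α` the integrand is `w·log (p^m/p_α)`. On `S` the logarithm is
the constant `KL_α + C₁`, in which the value of `p*` cancels, so that part of the integral is exact.
Off `S`, write `p^m/p_α = (p^m)²/w` and `p_α/p^m = p_α²/w`: the log-sum inequality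
`∫ w·log (v/w) ≤ (∫ w)·log (∫ v / ∫ w)` with `v = (p^m)²` gives the upper bound, and with
`v = p_α²`, after a change of sign, the lower one.
-/

theorem mul_log_div_le_tangent {a b c : ℝ} (ha : 0 ≤ a) (hb : 0 ≤ b) (hab : b = 0 → a = 0)
    (hc : 0 < c) : a * log (b / a) ≤ a * log c + b / c - a := by
  obtain rfl | ha := ha.eq_or_lt
  · simpa using div_nonneg hb hc.le
  have hb : 0 < b := hb.lt_of_ne' (mt hab ha.ne')
  calc a * log (b / a) = a * log c + a * log (b / a / c) := by
        rw [log_div (by positivity) hc.ne']; ring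
    _ ≤ a * log c + a * (b / a / c - 1) := by
        gcongr; exact log_le_sub_one_of_pos (by positivity)
    _ = a * log c + b / c - a := by field_simp; ring

theorem log_div_add_log_div {a b c : ℝ} (ha : a ≠ 0) (hb : b ≠ 0) (hc : c ≠ 0) :
    log (a / b) + log (b / c) = log (a / c) := by
  rw [← log_mul (div_ne_zero ha hb) (div_ne_zero hb hc), div_mul_div_cancel₀ hb]

section LogSum

variable {Ω : Type*} [MeasurableSpace Ω] {μ : Measure Ω} {u v w : Ω → ℝ}

theorem integral_pos_of_integral_pos_of_ae_eq_zero_imp (hv : 0 ≤ᵐ[μ] v)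
    (hv_int : Integrable v μ) (hvw : ∀ᵐ x ∂μ, v x = 0 → w x = 0) (hw_pos : 0 < ∫ x, w x ∂μ) :
    0 < ∫ x, v x ∂μ := by
  refine (integral_nonneg_of_ae hv).lt_of_ne' fun h => hw_pos.ne' (integral_eq_zero_of_ae ?_)
  filter_upwards [hvw, (integral_eq_zero_iff_of_nonneg_ae hv hv_int).1 h] with x hx hvx
  exact hx hvx

theorem integral_mul_log_div_le_of_integral_le {V : ℝ} (hw : 0 ≤ᵐ[μ] w)
    (hv : 0 ≤ᵐ[μ] v) (hvw : ∀ᵐ x ∂μ, v x = 0 → w x = 0) (hw_pos : 0 < ∫ x, w x ∂μ)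
    (hv_int : Integrable v μ) (hlog_int : Integrable (fun x => w x * log (v x / w x)) μ)
    (hV : ∫ x, v x ∂μ ≤ V) :
    ∫ x, w x * log (v x / w x) ∂μ ≤ (∫ x, w x ∂μ) * log (V / ∫ x, w x ∂μ) := by
  have hw_int : Integrable w μ := .of_integral_ne_zero hw_pos.ne'
  have hV_pos : 0 < V :=
    (integral_pos_of_integral_pos_of_ae_eq_zero_imp hv hv_int hvw hw_pos).trans_le hV
  set W := ∫ x, w x ∂μ
  -- The tangent to `log` at `c` is the optimal linear bound for `c = V / W`.
  set c := V / W with hc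
  have hc_pos : 0 < c := div_pos hV_pos hw_pos
  calc ∫ x, w x * log (v x / w x) ∂μ
      ≤ ∫ x, (w x * log c + v x / c - w x) ∂μ := by
        refine integral_mono_ae hlog_int
          (((hw_int.mul_const _).add (hv_int.div_const _)).sub hw_int) ?_
        filter_upwards [hw, hv, hvw] with x hwx hvx hvwx
        exact mul_log_div_le_tangent hwx hvx hvwx hc_pos
    _ = W * log c + (∫ x, v x ∂μ) / c - W := by
        rw [integral_sub (by exact (hw_int.mul_const _).add (hv_int.div_const _)) hw_int,
          integral_add (hw_int.mul_const _) (hv_int.div_const _), integral_mul_const,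
          integral_div]
    _ ≤ W * log c + V / c - W := by gcongr
    _ = W * log c := by rw [hc, div_div_cancel₀ hV_pos.ne', add_sub_cancel_right]

theorem integral_mul_mul_log_div_le_s7 {C : ℝ} (hu : 0 ≤ᵐ[μ] u) (hv : 0 ≤ᵐ[μ] v)
    (huv_pos : 0 < ∫ x, u x * v x ∂μ) (hu_sq : Integrable (fun x => u x ^ 2) μ)
    (hlog_int : Integrable (fun x => u x * v x * log (u x / v x)) μ)
    (hC : ∫ x, u x ^ 2 ∂μ ≤ C) :
    ∫ x, u x * v x * log (u x / v x) ∂μ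
      ≤ (∫ x, u x * v x ∂μ) * log (C / ∫ x, u x * v x ∂μ) := by
  have hratio (x : Ω) : u x / v x = u x ^ 2 / (u x * v x) := by
    obtain h | h := eq_or_ne (u x) 0
    · simp [h]
    · rw [sq, mul_div_mul_left _ _ h]
  simp only [hratio] at hlog_int ⊢
  refine integral_mul_log_div_le_of_integral_le ?_ (.of_forall fun x => sq_nonneg (u x))
    (.of_forall fun x hx => ?_) huv_pos hu_sq hlog_int hC
  · filter_upwards [hu, hv] with x hux hvx using mul_nonneg hux hvx
  · rw [sq_eq_zero_iff.1 hx, zero_mul]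

theorem neg_mul_log_le_integral_mul_mul_log_div {C : ℝ} (hu : 0 ≤ᵐ[μ] u) (hv : 0 ≤ᵐ[μ] v)
    (huv_pos : 0 < ∫ x, u x * v x ∂μ) (hv_sq : Integrable (fun x => v x ^ 2) μ)
    (hlog_int : Integrable (fun x => u x * v x * log (u x / v x)) μ)
    (hC : ∫ x, v x ^ 2 ∂μ ≤ C) :
    -((∫ x, u x * v x ∂μ) * log (C / ∫ x, u x * v x ∂μ))
      ≤ ∫ x, u x * v x * log (u x / v x) ∂μ := by
  have hswap (x : Ω) : u x * v x * log (u x / v x) = -(v x * u x * log (v x / u x)) := by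
    rw [← inv_div, log_inv, mul_comm (u x), mul_neg]
  simp only [hswap, integral_neg] at hlog_int ⊢
  simp only [mul_comm (u _)] at huv_pos ⊢
  exact neg_le_neg <|
    integral_mul_mul_log_div_le_s7 hv hu huv_pos hv_sq (integrable_neg_iff.1 hlog_int) hC

theorem mul_mul_log_div_ae_eq_of_div_eq {S : Set Ω} (hS : MeasurableSet S) {r : ℝ}
    (hr : ∀ᵐ x ∂μ, x ∈ S → u x / v x = r) :
    (fun x => u x * v x * log (u x / v x)) =ᵐ[μ.restrict S] fun x => u x * v x * log r := by
  filter_upwards [(ae_restrict_iff' hS).2 hr] with x hx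
  rw [hx]

end LogSum

theorem f_sandwich_bounds_general {Ω : Type*} [MeasurableSpace Ω] {μ : Measure Ω}
    {S : Set Ω} (hS : MeasurableSet S) {pm p : Ω → ℝ} (hpm : 0 ≤ᵐ[μ] pm) (hp : 0 ≤ᵐ[μ] p)
    {r : ℝ} (hr : ∀ᵐ θ ∂μ, θ ∈ S → pm θ / p θ = r)
    {ZS ZSb C₃ C₄ : ℝ}
    (hZS_int : IntegrableOn (fun θ => pm θ * p θ) S μ)
    (hZS : ZS = ∫ θ in S, pm θ * p θ ∂μ) (hZSb : ZSb = ∫ θ in Sᶜ, pm θ * p θ ∂μ)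
    (hZSb_pos : 0 < ZSb)
    (hpm_sq : IntegrableOn (fun θ => pm θ ^ 2) Sᶜ μ) (hC₃ : ∫ θ in Sᶜ, pm θ ^ 2 ∂μ ≤ C₃)
    (hp_sq : IntegrableOn (fun θ => p θ ^ 2) Sᶜ μ) (hC₄ : ∫ θ in Sᶜ, p θ ^ 2 ∂μ ≤ C₄)
    (hlog_int : IntegrableOn (fun θ => pm θ * p θ * log (pm θ / p θ)) Sᶜ μ) :
    (ZS * log r - ZSb * log (C₄ / ZSb)) / (ZS + ZSb)
        ≤ (ZS + ZSb)⁻¹ * ∫ θ, pm θ * p θ * log (pm θ / p θ) ∂μ ∧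
      (ZS + ZSb)⁻¹ * ∫ θ, pm θ * p θ * log (pm θ / p θ) ∂μ
        ≤ (ZS * log r + ZSb * log (C₃ / ZSb)) / (ZS + ZSb) := by
  have hZS_nonneg : 0 ≤ ZS := by
    rw [hZS]
    refine integral_nonneg_of_ae (ae_restrict_of_ae ?_)
    filter_upwards [hpm, hp] with θ hpmθ hpθ using mul_nonneg hpmθ hpθ
  have hlog_eq := mul_mul_log_div_ae_eq_of_div_eq hS hr
  have hlog_int_S : IntegrableOn (fun θ => pm θ * p θ * log (pm θ / p θ)) S μ :=
    (hZS_int.mul_const (log r)).congr hlog_eq.symm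
  have hlog_int_univ : Integrable (fun θ => pm θ * p θ * log (pm θ / p θ)) μ := by
    simpa only [Set.union_compl_self, integrableOn_univ] using hlog_int_S.union hlog_int
  rw [inv_mul_eq_div, ← integral_add_compl hS hlog_int_univ, integral_congr_ae hlog_eq,
    integral_mul_const, ← hZS, sub_eq_add_neg]
  subst hZSb
  constructor <;> gcongr
  · exact neg_mul_log_le_integral_mul_mul_log_div (ae_restrict_of_ae hpm) (ae_restrict_of_ae hp)
      hZSb_pos hp_sq hlog_int hC₄
  · exact integral_mul_mul_log_div_le_s7 (ae_restrict_of_ae hpm) (ae_restrict_of_ae hp)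
      hZSb_pos hpm_sq hlog_int hC₃

/-- **Sandwich bounds.** Under Assumption 1, if moreover `p^m·p_α·log(p^m/p_α)` is integrable
on `Ω∖S` for every `α`, then `f_l(α) ≤ f(α) ≤ f_u(α)` for every `α`. -/
theorem f_sandwich_bounds
    {Ω : Type*} [MeasurableSpace Ω] (μ : Measure Ω)
    (S : Set Ω) (hSmeas : MeasurableSet S) (hS0 : 0 < μ S) (hSfin : μ S < ⊤)
    (pstar : Ω → ℝ)
    (hpstar_in : ∀ θ ∈ S, pstar θ = ((μ S).toReal)⁻¹)
    (hpstar_out : ∀ θ ∉ S, pstar θ = 0)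
    (pm : Ω → ℝ) (hpm_meas : Measurable pm) (hpm_nonneg : ∀ θ, 0 ≤ pm θ)
    {A : Type*} [Nonempty A]
    (p : A → Ω → ℝ) (hp_meas : ∀ a, Measurable (p a))
    (hp_pos : ∀ a θ, 0 < p a θ)
    (hp_dens : ∀ a, ∫ θ, p a θ ∂μ = 1)
    -- Assumption 1
    (hpm_constS : ∀ θ ∈ S, ∀ θ' ∈ S, pm θ = pm θ')
    (hp_constS : ∀ a, ∀ θ ∈ S, ∀ θ' ∈ S, p a θ = p a θ')
    (θs : Ω) (hθsS : θs ∈ S) (hθs_pos : 0 < pm θs)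
    (C₁ C₂ : ℝ) (hC₂ : C₂ = pm θs) (hC₁ : C₁ = Real.log (pm θs / pstar θs))
    (KL : A → ℝ) (hKL : ∀ a, KL a = Real.log (pstar θs / p a θs))
    (ZS ZSb : A → ℝ)
    (hZS : ∀ a, ZS a = ∫ θ in S, pm θ * p a θ ∂μ)
    (hZSb : ∀ a, ZSb a = ∫ θ in Sᶜ, pm θ * p a θ ∂μ)
    (hZSb_int : ∀ a, IntegrableOn (fun θ => pm θ * p a θ) Sᶜ μ)
    (hZSb_pos : ∀ a, 0 < ZSb a)
    (C₃ : ℝ) (hC₃ : C₃ = ∫ θ in Sᶜ, (pm θ) ^ 2 ∂μ)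
    (hC₃_int : IntegrableOn (fun θ => (pm θ) ^ 2) Sᶜ μ)
    (hC₃_pos : 0 < C₃)
    (C₄ : ℝ)
    (hC₄_int : ∀ a, IntegrableOn (fun θ => (p a θ) ^ 2) Sᶜ μ)
    (hC₄ : IsLUB (Set.range fun a => ∫ θ in Sᶜ, (p a θ) ^ 2 ∂μ) C₄)
    (hC₄_pos : 0 < C₄)
    (f fu fl : A → ℝ)
    (hf_int : ∀ a,
      Integrable (fun θ => pm θ * p a θ * Real.log (pm θ / p a θ)) μ)
    -- moreover, integrability of the integrand on `Ω∖S`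
    (hf_int_compl : ∀ a,
      IntegrableOn (fun θ => pm θ * p a θ * Real.log (pm θ / p a θ)) Sᶜ μ)
    (hf : ∀ a, f a = (ZS a + ZSb a)⁻¹ *
      ∫ θ, pm θ * p a θ * Real.log (pm θ / p a θ) ∂μ)
    (hfu : ∀ a, fu a = (ZS a * (KL a + C₁) + ZSb a * Real.log (C₃ / ZSb a)) /
      (ZS a + ZSb a))
    (hfl : ∀ a, fl a = (ZS a * (KL a + C₁) - ZSb a * Real.log (C₄ / ZSb a)) /
      (ZS a + ZSb a)) :
    ∀ a : A, fl a ≤ f a ∧ f a ≤ fu a := by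
  intro a
  have hpstar : pstar θs ≠ 0 := by
    simpa [hpstar_in θs hθsS] using (ENNReal.toReal_pos hS0.ne' hSfin.ne).ne'
  have hprod_int : IntegrableOn (fun θ => pm θ * p a θ) S μ :=
    (integrableOn_const (C := pm θs * p a θs) hSfin.ne).congr_fun
      (fun θ hθ => congr_arg₂ _ (hpm_constS θs hθsS θ hθ) (hp_constS a θs hθsS θ hθ)) hSmeas
  rw [hfl, hf, hfu, hKL, hC₁, add_comm (log _),
    log_div_add_log_div hθs_pos.ne' hpstar (hp_pos a θs).ne']
  exact f_sandwich_bounds_general hSmeas (.of_forall hpm_nonneg)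
    (.of_forall fun θ => (hp_pos a θ).le)
    (.of_forall fun θ hθ => by rw [hpm_constS θ hθ θs hθsS, hp_constS a θ hθ θs hθsS])
    hprod_int (hZS a) (hZSb a) (hZSb_pos a) hC₃_int hC₃.ge (hC₄_int a) (hC₄.1 ⟨a, rfl⟩)
    (hf_int_compl a)
end

section
/- Under Assumption 1, suppose γ₂ ≤ C₃ and γ₂ ≤ C₄, and let α* ∈ A satisfy Assumption 2: f_u(α*) ≤ −log(C₄/γ₁). Then KL_{α*} + C₁ ≤ −log(C₄/γ₁); equivalently, C₂·e^{−KL_{α*}} ≥ C₅/γ₁ where C₅ = C₄·C₂·e^{C₁}. -/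
open MeasureTheory Real

/-!
The number `f_u(α*)` is a weighted average, with weights `Z(S)` and `Z(S̄)`, of `KL + C₁` and
`log (C₃ / Z(S̄))`. Cauchy–Schwarz gives `γ₁ * Z(S̄) ≤ Z(S̄)² ≤ C₃ * C₄`, so the second averaged
quantity is always at least `-log (C₄ / γ₁)`. If the average does not exceed this threshold, then
neither does `KL + C₁`.
-/

theorem le_of_weighted_average_le {𝕜 : Type*} [Field 𝕜] [LinearOrder 𝕜] [IsStrictOrderedRing 𝕜]
    {a b x y t : 𝕜} (ha : 0 < a) (hb : 0 ≤ b) (hy : t ≤ y)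
    (h : (a * x + b * y) / (a + b) ≤ t) : x ≤ t := by
  refine le_of_mul_le_mul_left ?_ ha
  have hsum : a * x + b * y ≤ t * (a + b) := (div_le_iff₀ (by positivity)).1 h
  have hby : b * t ≤ b * y := mul_le_mul_of_nonneg_left hy hb
  linarith

theorem add_le_neg_log_div_iff {a b m k c : ℝ} (ha : 0 < a) (hb : 0 < b) (hm : 0 < m) :
    k + c ≤ -log (a / b) ↔ a * m * exp c / b ≤ m * exp (-k) := by
  have hprod : a * m * exp c / b = m * exp (log (a / b) + c) := by
    rw [exp_add, exp_log (div_pos ha hb)]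
    ring
  rw [hprod, mul_le_mul_iff_right₀ hm, exp_le_exp]
  constructor <;> intro h <;> linarith

section Integral

variable {Ω : Type*} [MeasurableSpace Ω] {μ : Measure Ω} {f g : Ω → ℝ}

theorem setIntegral_pos_of_eqOn_const {S : Set Ω} {c : ℝ} (hS : MeasurableSet S) (hS₀ : μ S ≠ 0)
    (hS_top : μ S ≠ ⊤) (hf : S.EqOn f fun _ ↦ c) (hc : 0 < c) : 0 < ∫ θ in S, f θ ∂μ := by
  rw [setIntegral_congr_fun hS hf, setIntegral_const, smul_eq_mul]
  exact mul_pos (ENNReal.toReal_pos hS₀ hS_top) hc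

theorem integral_mul_sq_le_sq_mul_sq (hf : MemLp f 2 μ) (hg : MemLp g 2 μ) :
    (∫ θ, f θ * g θ ∂μ) ^ 2 ≤ (∫ θ, f θ ^ 2 ∂μ) * ∫ θ, g θ ^ 2 ∂μ := by
  have inner_toLp {u v : Ω → ℝ} (hu : MemLp u 2 μ) (hv : MemLp v 2 μ) :
      inner ℝ (hu.toLp u) (hv.toLp v) = ∫ θ, u θ * v θ ∂μ := by
    rw [L2.inner_def]
    refine integral_congr_ae ?_
    filter_upwards [hu.coeFn_toLp, hv.coeFn_toLp] with θ hθu hθv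
    rw [hθu, hθv, RCLike.inner_apply, conj_trivial, mul_comm]
  simpa only [inner_toLp, ← pow_two] using
    real_inner_mul_inner_self_le (hf.toLp f) (hg.toLp g)

theorem integral_sq_pos_of_integral_mul_ne_zero (hg : Integrable (fun θ ↦ g θ ^ 2) μ)
    (hfg : ∫ θ, f θ * g θ ∂μ ≠ 0) : 0 < ∫ θ, g θ ^ 2 ∂μ := by
  refine (integral_nonneg fun θ ↦ sq_nonneg (g θ)).lt_of_ne' fun hzero ↦ hfg ?_
  have hg_zero := (integral_eq_zero_iff_of_nonneg (fun θ ↦ sq_nonneg (g θ)) hg).1 hzero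
  refine integral_eq_zero_of_ae (hg_zero.mono fun θ hθ ↦ ?_)
  exact mul_eq_zero_of_right _ (sq_eq_zero_iff.1 hθ)

theorem neg_log_div_le_log_integral_sq_div {γ D : ℝ} (hf : MemLp f 2 μ) (hg : MemLp g 2 μ)
    (hγ : 0 < γ) (hγ_le : γ ≤ ∫ θ, f θ * g θ ∂μ) (hD : ∫ θ, g θ ^ 2 ∂μ ≤ D) :
    -log (D / γ) ≤ log ((∫ θ, f θ ^ 2 ∂μ) / ∫ θ, f θ * g θ ∂μ) := by
  have hZ : 0 < ∫ θ, f θ * g θ ∂μ := hγ.trans_le hγ_le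
  have hD_pos : 0 < D :=
    (integral_sq_pos_of_integral_mul_ne_zero hg.integrable_sq hZ.ne').trans_le hD
  have hprod : γ * ∫ θ, f θ * g θ ∂μ ≤ (∫ θ, f θ ^ 2 ∂μ) * D :=
    calc γ * ∫ θ, f θ * g θ ∂μ
      _ ≤ (∫ θ, f θ * g θ ∂μ) ^ 2 := by rw [pow_two]; gcongr
      _ ≤ (∫ θ, f θ ^ 2 ∂μ) * ∫ θ, g θ ^ 2 ∂μ := integral_mul_sq_le_sq_mul_sq hf hg
      _ ≤ (∫ θ, f θ ^ 2 ∂μ) * D := by gcongr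
  rw [← log_inv, inv_div]
  exact log_le_log (div_pos hγ hD_pos) ((div_le_div_iff₀ hD_pos hZ).2 hprod)

end Integral

/-- The quantity `f_u(α)` for `f = p^m` and `g = p_α`: an average weighted by the overlaps
`Z(S; α)` and `Z(S̄; α)` of `f` and `g`. The value `KL_α + C₁` carried by `S` is an arbitrary real
number `x` here. -/
noncomputable def overlapAverage {Ω : Type*} [MeasurableSpace Ω] (μ : Measure Ω) (S : Set Ω)
    (f g : Ω → ℝ) (x : ℝ) : ℝ :=
  ((∫ θ in S, f θ * g θ ∂μ) * x +
      (∫ θ in Sᶜ, f θ * g θ ∂μ) *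
        log ((∫ θ in Sᶜ, f θ ^ 2 ∂μ) / ∫ θ in Sᶜ, f θ * g θ ∂μ)) /
    ((∫ θ in S, f θ * g θ ∂μ) + ∫ θ in Sᶜ, f θ * g θ ∂μ)

theorem assumption2_bounds_KL_star_general {Ω : Type*} [MeasurableSpace Ω] {μ : Measure Ω}
    {S : Set Ω} {f g : Ω → ℝ} {γ D k c m : ℝ}
    (hf : MemLp f 2 (μ.restrict Sᶜ)) (hg : MemLp g 2 (μ.restrict Sᶜ))
    (hS : 0 < ∫ θ in S, f θ * g θ ∂μ)
    (hγ : 0 < γ) (hγ_le : γ ≤ ∫ θ in Sᶜ, f θ * g θ ∂μ)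
    (hD : ∫ θ in Sᶜ, g θ ^ 2 ∂μ ≤ D) (hm : 0 < m)
    (havg : overlapAverage μ S f g (k + c) ≤ -log (D / γ)) :
    k + c ≤ -log (D / γ) ∧ D * m * exp c / γ ≤ m * exp (-k) := by
  have hZ : 0 < ∫ θ in Sᶜ, f θ * g θ ∂μ := hγ.trans_le hγ_le
  have hD_pos : 0 < D :=
    (integral_sq_pos_of_integral_mul_ne_zero hg.integrable_sq hZ.ne').trans_le hD
  have hkc : k + c ≤ -log (D / γ) :=
    le_of_weighted_average_le hS hZ.le
      (neg_log_div_le_log_integral_sq_div hf hg hγ hγ_le hD) havg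
  exact ⟨hkc, (add_le_neg_log_div_iff hD_pos hγ hm).1 hkc⟩

/-- **Bound on `KL_{α*}` from Assumption 2.** Under Assumption 1, if `γ₂ ≤ C₃`, `γ₂ ≤ C₄`, and
`f_u(α*) ≤ −log(C₄/γ₁)`, then `KL_{α*} + C₁ ≤ −log(C₄/γ₁)`; equivalently
`C₂·e^{−KL_{α*}} ≥ C₅/γ₁` where `C₅ = C₄·C₂·e^{C₁}`. -/
theorem assumption2_bounds_KL_star
    {Ω : Type*} [MeasurableSpace Ω] (μ : Measure Ω)
    (S : Set Ω) (hSmeas : MeasurableSet S) (hS0 : 0 < μ S) (hSfin : μ S < ⊤)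
    (pstar : Ω → ℝ)
    (hpstar_in : ∀ θ ∈ S, pstar θ = ((μ S).toReal)⁻¹)
    (hpstar_out : ∀ θ ∉ S, pstar θ = 0)
    (pm : Ω → ℝ) (hpm_meas : Measurable pm) (hpm_nonneg : ∀ θ, 0 ≤ pm θ)
    {A : Type*} [Nonempty A]
    (p : A → Ω → ℝ) (hp_meas : ∀ a, Measurable (p a))
    (hp_pos : ∀ a θ, 0 < p a θ)
    (hp_dens : ∀ a, ∫ θ, p a θ ∂μ = 1)
    -- Assumption 1
    (hpm_constS : ∀ θ ∈ S, ∀ θ' ∈ S, pm θ = pm θ')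
    (hp_constS : ∀ a, ∀ θ ∈ S, ∀ θ' ∈ S, p a θ = p a θ')
    (θs : Ω) (hθsS : θs ∈ S) (hθs_pos : 0 < pm θs)
    (C₁ C₂ : ℝ) (hC₂ : C₂ = pm θs) (hC₁ : C₁ = Real.log (pm θs / pstar θs))
    (hC₁_nonpos : C₁ ≤ 0)
    (KL : A → ℝ) (hKL : ∀ a, KL a = Real.log (pstar θs / p a θs))
    (ZS ZSb : A → ℝ)
    (hZS : ∀ a, ZS a = ∫ θ in S, pm θ * p a θ ∂μ)
    (hZSb : ∀ a, ZSb a = ∫ θ in Sᶜ, pm θ * p a θ ∂μ)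
    (hZSb_int : ∀ a, IntegrableOn (fun θ => pm θ * p a θ) Sᶜ μ)
    (hZSb_pos : ∀ a, 0 < ZSb a)
    (γ₁ γ₂ : ℝ) (hγ₁ : IsGLB (Set.range ZSb) γ₁) (hγ₁_pos : 0 < γ₁)
    (hγ₂ : IsLUB (Set.range ZSb) γ₂)
    (C₃ : ℝ) (hC₃ : C₃ = ∫ θ in Sᶜ, (pm θ) ^ 2 ∂μ)
    (hC₃_int : IntegrableOn (fun θ => (pm θ) ^ 2) Sᶜ μ)
    (hC₃_pos : 0 < C₃)
    (C₄ : ℝ)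
    (hC₄_int : ∀ a, IntegrableOn (fun θ => (p a θ) ^ 2) Sᶜ μ)
    (hC₄ : IsLUB (Set.range fun a => ∫ θ in Sᶜ, (p a θ) ^ 2 ∂μ) C₄)
    (hC₄_pos : 0 < C₄)
    (C₅ : ℝ) (hC₅ : C₅ = C₄ * C₂ * Real.exp C₁)
    (fu : A → ℝ)
    (hfu : ∀ a, fu a = (ZS a * (KL a + C₁) + ZSb a * Real.log (C₃ / ZSb a)) /
      (ZS a + ZSb a))
    (hγ₂C₃ : γ₂ ≤ C₃) (hγ₂C₄ : γ₂ ≤ C₄)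
    (αs : A)
    (hA2 : fu αs ≤ - Real.log (C₄ / γ₁)) :
    KL αs + C₁ ≤ - Real.log (C₄ / γ₁) ∧
      C₅ / γ₁ ≤ C₂ * Real.exp (-(KL αs)) := by
  have hZS_pos : 0 < ∫ θ in S, pm θ * p αs θ ∂μ :=
    setIntegral_pos_of_eqOn_const hSmeas hS0.ne' hSfin.ne
      (fun θ hθ ↦ congrArg₂ (· * ·) (hpm_constS θ hθ θs hθsS) (hp_constS αs θ hθ θs hθsS))
      (mul_pos hθs_pos (hp_pos αs θs))
  subst hC₂ hC₃ hC₅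
  rw [hfu, hZS, hZSb] at hA2
  exact assumption2_bounds_KL_star_general
    ((memLp_two_iff_integrable_sq hpm_meas.aestronglyMeasurable).2 hC₃_int)
    ((memLp_two_iff_integrable_sq (hp_meas αs).aestronglyMeasurable).2 (hC₄_int αs))
    hZS_pos hγ₁_pos (hZSb αs ▸ hγ₁.1 ⟨αs, rfl⟩) (hC₄.1 ⟨αs, rfl⟩) hθs_pos hA2
end

section
/- Under Assumption 1, let α̂ ∈ A satisfy f_l(α̂) ≤ −log(C₄/γ₁). Then KL_{α̂} + C₁ ≤ −log(C₄/Z(S̄;α̂)) ≤ −log(C₄/γ₂); equivalently, C₂·e^{−KL_{α̂}} ≥ C₅/γ₂ where C₅ = C₄·C₂·e^{C₁}. -/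
open MeasureTheory Real

/-! Dividing by `Z(S) + Z(S̄)` makes `f_l` the average of `KL + C₁` and `-log (C₄ / Z(S̄))` with
weights `Z(S)` and `Z(S̄)`. Since `γ₁ ≤ Z(S̄)`, the hypothesis on `f_l` places this average below
its second entry, and `Z(S) > 0` then forces the first entry below the second as well. -/

theorem le_right_of_weighted_average_le {𝕜 : Type*} [Field 𝕜] [LinearOrder 𝕜]
    [IsStrictOrderedRing 𝕜] {v w x y : 𝕜} (hv : 0 < v) (hvw : 0 < v + w)
    (h : (v * x + w * y) / (v + w) ≤ y) : x ≤ y := by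
  rw [div_le_iff₀ hvw] at h
  exact le_of_mul_le_mul_left (by linarith) hv

theorem neg_log_div_le_neg_log_div {c a b : ℝ} (hc : 0 < c) (ha : 0 < a) (hab : a ≤ b) :
    -log (c / a) ≤ -log (c / b) :=
  have hb : 0 < b := ha.trans_le hab
  neg_le_neg (log_le_log (div_pos hc hb) (div_le_div_of_nonneg_left hc.le ha hab))

theorem add_le_neg_log_iff_mul_exp_le {x y t : ℝ} (ht : 0 < t) :
    x + y ≤ -log t ↔ t * exp y ≤ exp (-x) := by
  rw [← log_le_iff_le_exp (mul_pos ht (exp_pos y)), log_mul ht.ne' (exp_ne_zero y), log_exp]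
  constructor <;> intro h <;> linarith

section Evidence

variable {Ω : Type*} [MeasurableSpace Ω] (μ : Measure Ω) (S : Set Ω) (pm q : Ω → ℝ)

/-- The contribution `Z(S; α)` of the set `S` to the evidence, with `pm = p^m` and `q = p_α`. -/
noncomputable def setEvidence : ℝ :=
  ∫ θ in S, pm θ * q θ ∂μ

/-- The lower bound `f_l(α)` for the density `q = p_α`; the argument `x` stands for `KL_α + C₁`. -/
noncomputable def fLower (C₄ x : ℝ) : ℝ :=
  (setEvidence μ S pm q * x - setEvidence μ Sᶜ pm q * log (C₄ / setEvidence μ Sᶜ pm q)) /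
    (setEvidence μ S pm q + setEvidence μ Sᶜ pm q)

variable {μ S pm q}

theorem le_neg_log_div_of_fLower_le {C₄ x : ℝ} (hZS : 0 < setEvidence μ S pm q)
    (hZSc : 0 < setEvidence μ Sᶜ pm q)
    (h : fLower μ S pm q C₄ x ≤ -log (C₄ / setEvidence μ Sᶜ pm q)) :
    x ≤ -log (C₄ / setEvidence μ Sᶜ pm q) := by
  rw [fLower, sub_eq_add_neg, ← mul_neg] at h
  exact le_right_of_weighted_average_le hZS (add_pos hZS hZSc) h

theorem setEvidence_pos_of_const (hmeas : MeasurableSet S) (hS_ne_zero : μ S ≠ 0)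
    (hS_ne_top : μ S ≠ ⊤) (hpm : ∀ θ ∈ S, ∀ θ' ∈ S, pm θ = pm θ')
    (hq : ∀ θ ∈ S, ∀ θ' ∈ S, q θ = q θ') {θs : Ω} (hθs : θs ∈ S)
    (hpos : 0 < pm θs * q θs) : 0 < setEvidence μ S pm q := by
  have hconst : Set.EqOn (fun θ => pm θ * q θ) (fun _ => pm θs * q θs) S := fun θ hθ =>
    congrArg₂ (· * ·) (hpm θ hθ θs hθs) (hq θ hθ θs hθs)
  calc 0 < μ.real S * (pm θs * q θs) := mul_pos (ENNReal.toReal_pos hS_ne_zero hS_ne_top) hpos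
    _ = ∫ _ in S, pm θs * q θs ∂μ := by rw [setIntegral_const, smul_eq_mul]
    _ = setEvidence μ S pm q := (setIntegral_congr_fun hmeas hconst).symm

theorem fl_bounds_KL_hat_general (hZS : 0 < setEvidence μ S pm q) {KL C₁ C₂ C₄ γ₁ γ₂ : ℝ}
    (hC₂ : 0 ≤ C₂) (hC₄ : 0 < C₄) (hγ₁_pos : 0 < γ₁)
    (hγ₁ : γ₁ ≤ setEvidence μ Sᶜ pm q) (hγ₂ : setEvidence μ Sᶜ pm q ≤ γ₂)
    (hfl : fLower μ S pm q C₄ (KL + C₁) ≤ -log (C₄ / γ₁)) :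
    (KL + C₁ ≤ -log (C₄ / setEvidence μ Sᶜ pm q) ∧
      -log (C₄ / setEvidence μ Sᶜ pm q) ≤ -log (C₄ / γ₂)) ∧
      C₄ * C₂ * exp C₁ / γ₂ ≤ C₂ * exp (-KL) := by
  have hZSc : 0 < setEvidence μ Sᶜ pm q := hγ₁_pos.trans_le hγ₁
  have hKL : KL + C₁ ≤ -log (C₄ / setEvidence μ Sᶜ pm q) :=
    le_neg_log_div_of_fLower_le hZS hZSc
      (hfl.trans (neg_log_div_le_neg_log_div hC₄ hγ₁_pos hγ₁))
  have hlog := neg_log_div_le_neg_log_div hC₄ hZSc hγ₂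
  refine ⟨⟨hKL, hlog⟩, ?_⟩
  have hexp : C₄ / γ₂ * exp C₁ ≤ exp (-KL) :=
    (add_le_neg_log_iff_mul_exp_le (div_pos hC₄ (hZSc.trans_le hγ₂))).1 (hKL.trans hlog)
  calc C₄ * C₂ * exp C₁ / γ₂ = C₂ * (C₄ / γ₂ * exp C₁) := by ring
    _ ≤ C₂ * exp (-KL) := mul_le_mul_of_nonneg_left hexp hC₂

end Evidence

/-- **Bound on `KL_{α̂}` from the lower bound `f_l`.** Under Assumption 1, if
`f_l(α̂) ≤ −log(C₄/γ₁)`, then `KL_{α̂} + C₁ ≤ −log(C₄/Z(S̄;α̂)) ≤ −log(C₄/γ₂)`; equivalently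
`C₂·e^{−KL_{α̂}} ≥ C₅/γ₂` where `C₅ = C₄·C₂·e^{C₁}`. -/
theorem fl_bounds_KL_hat
    {Ω : Type*} [MeasurableSpace Ω] (μ : Measure Ω)
    (S : Set Ω) (hSmeas : MeasurableSet S) (hS0 : 0 < μ S) (hSfin : μ S < ⊤)
    (pstar : Ω → ℝ)
    (hpstar_in : ∀ θ ∈ S, pstar θ = ((μ S).toReal)⁻¹)
    (hpstar_out : ∀ θ ∉ S, pstar θ = 0)
    (pm : Ω → ℝ) (hpm_meas : Measurable pm) (hpm_nonneg : ∀ θ, 0 ≤ pm θ)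
    {A : Type*} [Nonempty A]
    (p : A → Ω → ℝ) (hp_meas : ∀ a, Measurable (p a))
    (hp_pos : ∀ a θ, 0 < p a θ)
    (hp_dens : ∀ a, ∫ θ, p a θ ∂μ = 1)
    -- Assumption 1
    (hpm_constS : ∀ θ ∈ S, ∀ θ' ∈ S, pm θ = pm θ')
    (hp_constS : ∀ a, ∀ θ ∈ S, ∀ θ' ∈ S, p a θ = p a θ')
    (θs : Ω) (hθsS : θs ∈ S) (hθs_pos : 0 < pm θs)
    (C₁ C₂ : ℝ) (hC₂ : C₂ = pm θs) (hC₁ : C₁ = Real.log (pm θs / pstar θs))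
    (hC₁_nonpos : C₁ ≤ 0)
    (KL : A → ℝ) (hKL : ∀ a, KL a = Real.log (pstar θs / p a θs))
    (ZS ZSb : A → ℝ)
    (hZS : ∀ a, ZS a = ∫ θ in S, pm θ * p a θ ∂μ)
    (hZSb : ∀ a, ZSb a = ∫ θ in Sᶜ, pm θ * p a θ ∂μ)
    (hZSb_int : ∀ a, IntegrableOn (fun θ => pm θ * p a θ) Sᶜ μ)
    (hZSb_pos : ∀ a, 0 < ZSb a)
    (γ₁ γ₂ : ℝ) (hγ₁ : IsGLB (Set.range ZSb) γ₁) (hγ₁_pos : 0 < γ₁)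
    (hγ₂ : IsLUB (Set.range ZSb) γ₂)
    (C₄ : ℝ)
    (hC₄_int : ∀ a, IntegrableOn (fun θ => (p a θ) ^ 2) Sᶜ μ)
    (hC₄ : IsLUB (Set.range fun a => ∫ θ in Sᶜ, (p a θ) ^ 2 ∂μ) C₄)
    (hC₄_pos : 0 < C₄)
    (C₅ : ℝ) (hC₅ : C₅ = C₄ * C₂ * Real.exp C₁)
    (fl : A → ℝ)
    (hfl : ∀ a, fl a = (ZS a * (KL a + C₁) - ZSb a * Real.log (C₄ / ZSb a)) /
      (ZS a + ZSb a))
    (αh : A)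
    (hflh : fl αh ≤ - Real.log (C₄ / γ₁)) :
    (KL αh + C₁ ≤ - Real.log (C₄ / ZSb αh) ∧
      - Real.log (C₄ / ZSb αh) ≤ - Real.log (C₄ / γ₂)) ∧
      C₅ / γ₂ ≤ C₂ * Real.exp (-(KL αh)) := by
  have hγ₁_le : γ₁ ≤ ZSb αh := hγ₁.1 ⟨αh, rfl⟩
  have hγ₂_ge : ZSb αh ≤ γ₂ := hγ₂.1 ⟨αh, rfl⟩
  rw [hfl, hZS, hZSb] at hflh
  rw [hZSb] at hγ₁_le hγ₂_ge ⊢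
  rw [hC₅]
  exact fl_bounds_KL_hat_general
    (setEvidence_pos_of_const hSmeas hS0.ne' hSfin.ne hpm_constS (hp_constS αh) hθsS
      (mul_pos hθs_pos (hp_pos αh θs)))
    (hC₂ ▸ hθs_pos.le) hC₄_pos hγ₁_pos hγ₁_le hγ₂_ge hflh
end
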